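/- A finite residuated lattice is integrally closed if and only if it is integral. -/

import Mathlib

/-- A residuated lattice: a lattice-ordered monoid with left and right residuals,
i.e. `b ≤ a\c ↔ a*b ≤ c ↔ a ≤ c/b`.  `ldiv a c` denotes `a\c` and `rdiv c b` denotes `c/b`. -/
class ResiduatedLattice (α : Type*) extends Lattice α, Monoid α where
  ldiv : α → α → α
  rdiv : α → α → α
  le_ldiv_iff : ∀ a b c : α, b ≤ ldiv a c ↔ a * b ≤ c
  le_rdiv_iff : ∀ a b c : α, a ≤ rdiv c b ↔ a * b ≤ c

open ResiduatedLattice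

namespace ResiduatedLattice

variable {α : Type*} [ResiduatedLattice α]

theorem one_le_ldiv_self (a : α) : 1 ≤ ldiv a a :=
  (le_ldiv_iff a 1 a).2 (mul_one a).le

theorem one_le_rdiv_self (a : α) : 1 ≤ rdiv a a :=
  (le_rdiv_iff 1 a a).2 (one_mul a).le

theorem le_ldiv_self_of_isTop {t : α} (ht : IsTop t) (a : α) : a ≤ ldiv t t :=
  (le_ldiv_iff t a t).2 (ht (t * a))

end ResiduatedLattice

theorem finite_integrally_closed_iff_integral_general {α : Type*} [ResiduatedLattice α]
    (hα : BddAbove (Set.univ : Set α)) :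
    (∀ a : α, ldiv a a = 1 ∧ rdiv a a = 1) ↔ (∀ a : α, a ≤ 1) := by
  constructor
  · intro integrally_closed a
    obtain ⟨t, ht⟩ := hα
    have t_isTop : IsTop t := fun b ↦ ht (Set.mem_univ b)
    calc
      a ≤ ldiv t t := le_ldiv_self_of_isTop t_isTop a
      _ = 1 := (integrally_closed t).1
  · intro integral a
    exact ⟨(integral _).antisymm (one_le_ldiv_self a), (integral _).antisymm (one_le_rdiv_self a)⟩

/-- A finite residuated lattice is integrally closed iff it is integral. -/
theorem finite_integrally_closed_iff_integral {α : Type*} [ResiduatedLattice α] [Finite α] :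
    (∀ a : α, ldiv a a = 1 ∧ rdiv a a = 1) ↔ (∀ a : α, a ≤ 1) :=
  finite_integrally_closed_iff_integral_general Set.finite_univ.bddAbove
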